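/- Let a be a ribbon with n ≥ 4 nodes p_1, …, p_n (in cyclic order), all of which are positive, with levels l_i = φ(p_i), and suppose that the intersection over i = 1, …, n−1 of the closed intervals with endpoints l_i and l_{i+1} is nonempty (a is a positive alternation). Then γ(a) = 1: every extension of a has at least one critical point in the open unit disk, and some extension of a has exactly one critical point. -/

import Mathlib

open scoped RealInnerProductSpace

noncomputable section

abbrev E2 : Type := EuclideanSpace ℝ (Fin 2)

/-- The point (cos t, sin t) on the unit circle in ℝ². -/
def sphPt (t : ℝ) : E2 := (EuclideanSpace.equiv (Fin 2) ℝ).symm ![Real.cos t, Real.sin t]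

/-- A ribbon with `n` nodes, encoded via the angle parametrization `g = φ ∘ (cos, sin)`
of a C^∞ function `φ : S¹ → ℝ` whose critical points on the circle are exactly the `n`
nondegenerate local extrema (nodes) at angles `θ 0 < θ 1 < ⋯ < θ (n-1)` in `[0, 2π)`,
with pairwise distinct critical values, together with a marking `ν` of the nodes by `±1`. -/
structure Ribbon (n : ℕ) : Type where
  g : ℝ → ℝ
  θ : Fin n → ℝ
  ν : Fin n → ℤ
  n_even : Even n
  n_pos : 0 < n
  smooth_g : ContDiff ℝ (⊤ : ℕ∞) g
  periodic_g : Function.Periodic g (2 * Real.pi)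
  theta_mem : ∀ i, θ i ∈ Set.Ico (0 : ℝ) (2 * Real.pi)
  theta_mono : StrictMono θ
  node_crit : ∀ i, deriv g (θ i) = 0
  node_nondeg : ∀ i, deriv (deriv g) (θ i) ≠ 0
  crit_only : ∀ t ∈ Set.Ico (0 : ℝ) (2 * Real.pi), deriv g t = 0 → ∃ i, t = θ i
  values_distinct : ∀ i j, g (θ i) = g (θ j) → i = j
  nu_sign : ∀ i, ν i = 1 ∨ ν i = -1

/-- The signature σ = s₊ − s₋ of a ribbon. -/
def Ribbon.sigma {n : ℕ} (a : Ribbon n) : ℤ := ∑ i, a.ν i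

/-- Critical points of `f` in the open unit disk. -/
def critPts (f : E2 → ℝ) : Set E2 :=
  {x | x ∈ Metric.ball (0 : E2) 1 ∧ fderiv ℝ f x = 0}

/-- `f : ℝ² → ℝ` is an extension of the ribbon `a`: it is C^∞, agrees with `φ` on the unit
circle, has nowhere-vanishing gradient on the circle, and at each node the radial derivative
`⟪∇f(p), p⟫` has sign `ν p` if `p` is a local maximum of `φ` (second derivative of `g`
negative there) and sign `−ν p` if `p` is a local minimum of `φ`. -/
def IsExtension {n : ℕ} (a : Ribbon n) (f : E2 → ℝ) : Prop :=
  ContDiff ℝ (⊤ : ℕ∞) f ∧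
  (∀ t : ℝ, f (sphPt t) = a.g t) ∧
  (∀ x ∈ Metric.sphere (0 : E2) 1, fderiv ℝ f x ≠ 0) ∧
  (∀ i : Fin n,
    (deriv (deriv a.g) (a.θ i) < 0 →
      0 < (a.ν i : ℝ) * ⟪gradient f (sphPt (a.θ i)), sphPt (a.θ i)⟫) ∧
    (0 < deriv (deriv a.g) (a.θ i) →
      (a.ν i : ℝ) * ⟪gradient f (sphPt (a.θ i)), sphPt (a.θ i)⟫ < 0))

/-- The ribbon invariant γ: the infimum, over all extensions `f` of `a`, of the number of
critical points of `f` in the open unit disk (a value in `ℕ∞`). -/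
def gammaR {n : ℕ} (a : Ribbon n) : ℕ∞ :=
  sInf {k : ℕ∞ | ∃ f : E2 → ℝ, IsExtension a f ∧ (critPts f).encard = k}

structure HomG {V : Type} [NormedAddCommGroup V] [NormedSpace ℝ V] (N : ℕ) (G : E2 → V) : Prop where
  smooth : ∀ x, x ≠ 0 → ContDiffAt ℝ (⊤ : ℕ∞) G x
  hom : ∀ c : ℝ, 0 < c → ∀ x, x ≠ 0 → G (c • x) = (c⁻¹) ^ N • G x

def eFl (x : E2) : ℝ := expNegInvGlue (‖x‖ ^ 2)

lemma eFl_zero : eFl 0 = 0 := by simp [eFl, expNegInvGlue.zero]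

lemma glue_deriv (y : ℝ) : HasDerivAt expNegInvGlue ((y⁻¹) ^ 2 * expNegInvGlue y) y := by
  have := expNegInvGlue.hasDerivAt_polynomial_eval_inv_mul 1 y
  simpa using this

lemma eFl_deriv (x : E2) : HasFDerivAt eFl
    ((((‖x‖ ^ 2)⁻¹) ^ 2 * eFl x) • (2 • innerSL ℝ x)) x :=
  (glue_deriv (‖x‖ ^ 2)).comp_hasFDerivAt x (hasStrictFDerivAt_norm_sq x).hasFDerivAt

lemma eFl_tendsto (N : ℕ) :
    Filter.Tendsto (fun x : E2 => (‖x‖⁻¹) ^ N * eFl x) (nhds 0) (nhds 0) := by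
  have h1 := expNegInvGlue.tendsto_polynomial_inv_mul_zero (Polynomial.X ^ N)
  have h2 : Filter.Tendsto (fun x : E2 => ‖x‖ ^ 2) (nhds 0) (nhds 0) := by
    have : Continuous (fun x : E2 => ‖x‖ ^ 2) := by fun_prop
    simpa using this.tendsto 0
  have h3 : Filter.Tendsto (fun x : E2 => ‖x‖ ^ N) (nhds 0) (nhds (0 ^ N)) := by
    have : Continuous (fun x : E2 => ‖x‖ ^ N) := by fun_prop
    simpa using this.tendsto 0
  have h4 := h3.mul (h1.comp h2)
  rw [mul_zero] at h4
  refine h4.congr fun x => ?_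
  by_cases hx : x = 0
  · simp [hx, eFl_zero, expNegInvGlue.zero]
  · have : ‖x‖ ≠ 0 := by simpa using hx
    simp only [Function.comp, Polynomial.eval_pow, Polynomial.eval_X, eFl]
    rw [← mul_assoc, ← mul_pow]
    congr 2
    field_simp

section
variable {V : Type} [NormedAddCommGroup V] [NormedSpace ℝ V] {N : ℕ} {G : E2 → V}

lemma HomG.bound (h : HomG N G) : ∃ C : ℝ, 0 ≤ C ∧ ∀ x, x ≠ 0 → ‖G x‖ ≤ C * (‖x‖⁻¹) ^ N := by
  have hc : ContinuousOn G (Metric.sphere (0 : E2) 1) := fun x hx =>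
    (h.smooth x (by rintro rfl; simp at hx)).continuousAt.continuousWithinAt
  obtain ⟨C, hC⟩ := (isCompact_sphere (0 : E2) 1).exists_bound_of_continuousOn hc
  refine ⟨max C 0, le_max_right _ _, fun x hx => ?_⟩
  have hn : 0 < ‖x‖ := by simpa using hx
  have h1 : x = ‖x‖ • (‖x‖⁻¹ • x) := by rw [smul_smul, mul_inv_cancel₀ hn.ne', one_smul]
  have h2 : ‖‖x‖⁻¹ • x‖ = 1 := by rw [norm_smul]; simp [hn.ne']
  have h3 := h.hom ‖x‖ hn (‖x‖⁻¹ • x) (by intro h0; simp [h0] at h2)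
  rw [← h1] at h3
  rw [h3, norm_smul, mul_comm, Real.norm_of_nonneg (by positivity)]
  gcongr
  exact (hC _ (by simp [h2])).trans (le_max_left _ _)

lemma HomG.hasFDerivAt_zero (h : HomG N G) :
    HasFDerivAt (fun x => eFl x • G x) (0 : E2 →L[ℝ] V) 0 := by
  obtain ⟨C, hC0, hC⟩ := h.bound
  rw [hasFDerivAt_iff_isLittleO_nhds_zero]
  simp only [zero_add, eFl_zero, zero_smul, sub_zero, zero_apply]
  rw [Asymptotics.isLittleO_iff]
  intro ε hε
  have h1 := (eFl_tendsto (N + 1)).const_mul C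
  rw [mul_zero] at h1
  filter_upwards [h1.eventually (gt_mem_nhds hε)] with x hx
  by_cases h0 : x = 0
  · simp [h0, eFl_zero]
  have hn : 0 < ‖x‖ := by simpa using h0
  have he : 0 ≤ eFl x := expNegInvGlue.nonneg _
  rw [norm_smul, Real.norm_of_nonneg he]
  calc eFl x * ‖G x‖ ≤ eFl x * (C * (‖x‖⁻¹) ^ N) := by gcongr; exact hC x h0
    _ = (C * ((‖x‖⁻¹) ^ (N + 1) * eFl x)) * ‖x‖ := by rw [pow_succ]; field_simp
    _ ≤ ε * ‖x‖ := by gcongr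

def G1 (G : E2 → V) (x : E2) : E2 →L[ℝ] V :=
  (((‖x‖ ^ 2)⁻¹) ^ 2) • (2 • innerSL ℝ x).smulRight (G x)

lemma HomG.G1 (h : HomG N G) : HomG (N + 3) (G1 G) := by
  constructor
  · intro x hx
    have hn : ‖x‖ ^ 2 ≠ 0 := by simpa using hx
    unfold _root_.G1
    have h1 : ContDiffAt ℝ (⊤ : ℕ∞) (fun x : E2 => ((‖x‖ ^ 2)⁻¹) ^ 2) x :=
      (((contDiff_norm_sq ℝ).contDiffAt).inv hn).pow 2
    have h2 : ContDiffAt ℝ (⊤ : ℕ∞) (fun x : E2 => 2 • innerSL ℝ x) x :=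
      ((innerSL ℝ (E := E2)).contDiff.const_smul (2 : ℕ)).contDiffAt
    exact h1.smul (h2.smulRight (h.smooth x hx))
  · intro c hc x hx
    have hn : ‖x‖ ≠ 0 := by simpa using hx
    unfold _root_.G1
    ext v
    simp only [norm_smul, Real.norm_of_nonneg hc.le, h.hom c hc x hx]
    simp only [smul_apply, ContinuousLinearMap.smulRight_apply, innerSL_apply_apply, smul_smul, inner_smul_left]
    simp only [smul_smul, nsmul_eq_mul, ← mul_assoc]
    congr 1
    simp
    field_simp
    ring

lemma HomG.fderiv (h : HomG N G) : HomG (N + 1) (fderiv ℝ G) := by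
  constructor
  · intro x hx
    exact (h.smooth x hx).fderiv_right (by simp)
  · intro c hc x hx
    have hcx : c • x ≠ 0 := smul_ne_zero hc.ne' hx
    have hd : HasFDerivAt G (_root_.fderiv ℝ G (c • x)) (c • x) :=
      ((h.smooth _ hcx).differentiableAt (by simp)).hasFDerivAt
    have hd' : HasFDerivAt G (_root_.fderiv ℝ G x) x :=
      ((h.smooth _ hx).differentiableAt (by simp)).hasFDerivAt
    have e1 : HasFDerivAt (fun y : E2 => c • y) (c • ContinuousLinearMap.id ℝ E2) x :=
      (hasFDerivAt_id x).const_smul c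
    have e2 := hd.comp x e1
    have e3 := hd'.const_smul ((c⁻¹) ^ N)
    have e4 : (fun y => (c⁻¹) ^ N • G y) =ᶠ[nhds x] (G ∘ fun y => c • y) := by
      filter_upwards [isOpen_ne.mem_nhds hx] with y hy
      exact (h.hom c hc y hy).symm
    have e5 := (e2.congr_of_eventuallyEq e4).unique e3
    ext v
    have e6 := congrArg (fun L => L v) e5
    simp only [ContinuousLinearMap.comp_apply, smul_apply, ContinuousLinearMap.id_apply, map_smul] at e6
    rw [smul_apply, pow_succ', mul_smul, ← e6, smul_smul, inv_mul_cancel₀ hc.ne', one_smul]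

lemma HomG.hasFDerivAt (h : HomG N G) (x : E2) :
    HasFDerivAt (fun x => eFl x • G x) (eFl x • _root_.G1 G x + eFl x • _root_.fderiv ℝ G x) x := by
  by_cases hx : x = 0
  · subst hx
    simpa [eFl_zero] using h.hasFDerivAt_zero
  · have hd' : HasFDerivAt G (_root_.fderiv ℝ G x) x :=
      ((h.smooth _ hx).differentiableAt (by simp)).hasFDerivAt
    have := (eFl_deriv x).smul hd'
    have e : eFl x • _root_.G1 G x + eFl x • _root_.fderiv ℝ G x = eFl x • _root_.fderiv ℝ G x +
        (((‖x‖ ^ 2)⁻¹ ^ 2 * eFl x) • 2 • (innerSL ℝ) x).smulRight (G x) := by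
      rw [add_comm]
      congr 1
      ext v
      simp [_root_.G1, smul_smul]
      congr 1
      ring
    rw [e]
    exact this

end

lemma HomG.contDiff_nat (m : ℕ) : ∀ {V : Type} [NormedAddCommGroup V] [NormedSpace ℝ V] {N : ℕ}
    {G : E2 → V}, HomG N G → ContDiff ℝ m (fun x => eFl x • G x) := by
  induction m with
  | zero =>
    intro V _ _ N G h
    simp only [Nat.cast_zero, contDiff_zero]
    exact continuous_iff_continuousAt.2 fun x => (h.hasFDerivAt x).continuousAt
  | succ m ih =>
    intro V _ _ N G h
    rw [Nat.cast_succ, contDiff_succ_iff_fderiv]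
    refine ⟨fun x => (h.hasFDerivAt x).differentiableAt, by simp, ?_⟩
    rw [show _root_.fderiv ℝ (fun x => eFl x • G x) = fun x => eFl x • _root_.G1 G x + eFl x • _root_.fderiv ℝ G x from
      funext fun x => (h.hasFDerivAt x).fderiv]
    exact (ih h.G1).add (ih h.fderiv)

lemma HomG.contDiff {V : Type} [NormedAddCommGroup V] [NormedSpace ℝ V] {N : ℕ}
    {G : E2 → V} (h : HomG N G) : ContDiff ℝ (⊤ : ℕ∞) (fun x => eFl x • G x) :=
  contDiff_infty.2 fun m => h.contDiff_nat m

def toC (x : E2) : ℂ := (x 0 : ℂ) + (x 1 : ℂ) * Complex.I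

lemma toC_smul (c : ℝ) (x : E2) : toC (c • x) = (c : ℂ) * toC x := by
  simp [toC]; ring

lemma toC_sph (t : ℝ) : toC (sphPt t) = Complex.cos t + Complex.sin t * Complex.I := by
  simp [toC, sphPt]

lemma toC_re (x : E2) : (toC x).re = x 0 := by simp [toC]

lemma toC_im (x : E2) : (toC x).im = x 1 := by simp [toC]

lemma toC_ne {x : E2} (hx : x ≠ 0) : toC x ≠ 0 := by
  intro h
  apply hx
  ext i
  fin_cases i
  · simpa [h] using (toC_re x).symm
  · simpa [h] using (toC_im x).symm

lemma toC_contDiff : ContDiff ℝ (⊤ : ℕ∞) toC := by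
  unfold toC
  have h : ∀ i : Fin 2, ContDiff ℝ (⊤ : ℕ∞) (fun x : E2 => ((x i : ℝ) : ℂ)) := fun i =>
    Complex.ofRealCLM.contDiff.comp (by fun_prop)
  exact (h 0).add ((h 1).mul contDiff_const)

lemma per_angle {g : ℝ → ℝ} (hg : Function.Periodic g (2 * Real.pi)) {s t : ℝ}
    (h : (s : Real.Angle) = t) : g s = g t := by
  obtain ⟨k, hk⟩ := Real.Angle.angle_eq_iff_two_pi_dvd_sub.1 h
  have : s = t + k * (2 * Real.pi) := by linarith
  rw [this]
  exact hg.int_mul k t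

def G0 (g : ℝ → ℝ) (x : E2) : ℝ := g (toC x).arg

lemma G0_polar {g : ℝ → ℝ} (hg : Function.Periodic g (2 * Real.pi)) {r : ℝ} (hr : 0 < r) (t : ℝ) :
    G0 g (r • sphPt t) = g t := by
  unfold G0
  rw [toC_smul, toC_sph]
  refine per_angle hg ?_
  have := Complex.arg_mul_cos_add_sin_mul_I_coe_angle hr (t : Real.Angle)
  simpa using this

lemma sph_norm (t : ℝ) : ‖sphPt t‖ = 1 := by
  rw [EuclideanSpace.norm_eq]
  simp [sphPt]

lemma polar_exists {x : E2} (hx : x ≠ 0) : ∃ t : ℝ, x = ‖x‖ • sphPt t := by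
  have hz := toC_ne hx
  have hnorm : ‖toC x‖ = ‖x‖ := by
    rw [EuclideanSpace.norm_eq, Complex.norm_eq_sqrt_sq_add_sq, toC_re, toC_im]
    simp
  refine ⟨(toC x).arg, ?_⟩
  ext i
  fin_cases i
  · simp [sphPt, ← hnorm, toC_re]
  · simp [sphPt, ← hnorm, toC_im]

lemma G0_smooth {g : ℝ → ℝ} (hg : Function.Periodic g (2 * Real.pi))
    (hs : ContDiff ℝ (⊤ : ℕ∞) g) : HomG 0 (G0 g) := by
  constructor
  · intro x hx
    have hz := toC_ne hx
    set z := toC x with hzdef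
    have e : G0 g =ᶠ[nhds x] fun y => g (z.arg + (Complex.log (toC y * z⁻¹)).im) := by
      filter_upwards [isOpen_ne.mem_nhds hx] with y hy
      unfold G0
      apply per_angle hg
      rw [Complex.log_im, Real.Angle.coe_add,
        Complex.arg_mul_coe_angle (toC_ne hy) (inv_ne_zero hz), Complex.arg_inv_coe_angle]
      abel
    refine ContDiffAt.congr_of_eventuallyEq ?_ e
    have h1 : ContDiffAt ℝ (⊤ : ℕ∞) (fun y => toC y * z⁻¹) x :=
      (toC_contDiff.mul contDiff_const).contDiffAt
    have h2 : ContDiffAt ℝ (⊤ : ℕ∞) Complex.log (toC x * z⁻¹) := by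
      refine (Complex.contDiffAt_log ?_).restrict_scalars ℝ
      rw [← hzdef, mul_inv_cancel₀ hz]
      simp
    have h3 := h2.comp x h1
    exact hs.contDiffAt.comp x (contDiffAt_const.add (Complex.imCLM.contDiff.contDiffAt.comp x h3))
  · intro c hc x hx
    simp [G0, toC_smul, Complex.arg_real_mul _ hc]

lemma sph_deriv (t : ℝ) : HasDerivAt sphPt (sphPt (t + Real.pi / 2)) t := by
  have h : HasDerivAt (fun t : ℝ => ![Real.cos t, Real.sin t])
      ![Real.cos (t + Real.pi / 2), Real.sin (t + Real.pi / 2)] t := by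
    rw [hasDerivAt_pi]
    intro i
    fin_cases i
    · simpa [Real.cos_add_pi_div_two] using Real.hasDerivAt_cos t
    · simpa [Real.sin_add_pi_div_two] using Real.hasDerivAt_sin t
  exact (EuclideanSpace.equiv (Fin 2) ℝ).symm.toContinuousLinearMap.hasFDerivAt.comp_hasDerivAt t h

def fExt (g : ℝ → ℝ) (c : ℝ) (x : E2) : ℝ :=
  eFl x • G0 (fun t => (g t - c) / expNegInvGlue 1) x + c

section
variable {g : ℝ → ℝ} (hg : Function.Periodic g (2 * Real.pi)) (hs : ContDiff ℝ (⊤ : ℕ∞) g) (c : ℝ)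
include hg

lemma fExt_polar {r : ℝ} (hr : 0 < r) (t : ℝ) :
    fExt g c (r • sphPt t) = expNegInvGlue (r ^ 2) * ((g t - c) / expNegInvGlue 1) + c := by
  unfold fExt
  rw [G0_polar _ hr]
  · simp [eFl, norm_smul, sph_norm]
  · intro t; simp only [hg t]

include hs

lemma fExt_hom : HomG 0 (G0 (fun t => (g t - c) / expNegInvGlue 1)) := by
  apply G0_smooth
  · intro t; simp only [hg t]
  · exact (hs.sub contDiff_const).div_const _

lemma fExt_contDiff : ContDiff ℝ (⊤ : ℕ∞) (fExt g c) :=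
  (fExt_hom hg hs c).contDiff.add contDiff_const

lemma fExt_crit_zero : fderiv ℝ (fExt g c) 0 = 0 :=
  ((fExt_hom hg hs c).hasFDerivAt_zero.add_const c).fderiv

lemma fExt_radial {r : ℝ} (hr : 0 < r) (t : ℝ) :
    fderiv ℝ (fExt g c) (r • sphPt t) (sphPt t) =
      ((r ^ 2)⁻¹ ^ 2 * expNegInvGlue (r ^ 2) * (2 * r)) * ((g t - c) / expNegInvGlue 1) := by
  have h1 : HasFDerivAt (fExt g c) (fderiv ℝ (fExt g c) (r • sphPt t)) (r • sphPt t) :=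
    ((fExt_contDiff hg hs c).differentiable (by simp) _).hasFDerivAt
  have h2 : HasDerivAt (fun s : ℝ => s • sphPt t) (sphPt t) r := by
    simpa using (hasDerivAt_id r).smul_const (sphPt t)
  have h3 := h1.comp_hasDerivAt r h2
  have h4 : HasDerivAt (fun s : ℝ => expNegInvGlue (s ^ 2) * ((g t - c) / expNegInvGlue 1) + c)
      (((r ^ 2)⁻¹ ^ 2 * expNegInvGlue (r ^ 2) * (2 * r)) * ((g t - c) / expNegInvGlue 1)) r := by
    have h5 : HasDerivAt (fun s : ℝ => s ^ 2) (2 * r) r := by simpa using hasDerivAt_pow 2 r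
    exact (((glue_deriv (r ^ 2)).comp r h5).mul_const _).add_const c
  refine h3.unique (h4.congr_of_eventuallyEq ?_)
  filter_upwards [lt_mem_nhds hr] with s hs
  exact fExt_polar hg c hs t

lemma fExt_tang {r : ℝ} (hr : 0 < r) (t : ℝ) :
    fderiv ℝ (fExt g c) (r • sphPt t) (r • sphPt (t + Real.pi / 2)) =
      expNegInvGlue (r ^ 2) * (deriv g t / expNegInvGlue 1) := by
  have h1 : HasFDerivAt (fExt g c) (fderiv ℝ (fExt g c) (r • sphPt t)) (r • sphPt t) :=
    ((fExt_contDiff hg hs c).differentiable (by simp) _).hasFDerivAt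
  have h2 : HasDerivAt (fun s : ℝ => r • sphPt s) (r • sphPt (t + Real.pi / 2)) t :=
    (sph_deriv t).const_smul r
  have h3 := h1.comp_hasDerivAt t h2
  have h4 : HasDerivAt (fun s : ℝ => expNegInvGlue (r ^ 2) * ((g s - c) / expNegInvGlue 1) + c)
      (expNegInvGlue (r ^ 2) * (deriv g t / expNegInvGlue 1)) t := by
    have h5 : HasDerivAt g (deriv g t) t := (hs.differentiable (by simp) t).hasDerivAt
    exact (((h5.sub_const c).div_const _).const_mul _).add_const c
  refine h3.unique (h4.congr_of_eventuallyEq ?_)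
  filter_upwards with s
  exact fExt_polar hg c hr s

lemma fExt_ne (hc : ∀ t, deriv g t = 0 → g t ≠ c) {x : E2} (hx : x ≠ 0) :
    fderiv ℝ (fExt g c) x ≠ 0 := by
  obtain ⟨t, ht⟩ := polar_exists hx
  have hr : 0 < ‖x‖ := by simpa using hx
  intro h0
  have h1 := fExt_radial hg hs c hr t
  have h2 := fExt_tang hg hs c hr t
  rw [← ht, h0] at h1 h2
  have e1 : 0 < expNegInvGlue 1 := expNegInvGlue.pos_of_pos one_pos
  have e2 : 0 < expNegInvGlue (‖x‖ ^ 2) := expNegInvGlue.pos_of_pos (by positivity)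
  simp [e1.ne', e2.ne', hr.ne'] at h1 h2
  exact hc t h2 (by linarith)

lemma fExt_grad (t : ℝ) :
    ∃ k : ℝ, 0 < k ∧ ⟪gradient (fExt g c) (sphPt t), sphPt t⟫ = k * (g t - c) := by
  have h1 := fExt_radial hg hs c one_pos t
  have e1 : 0 < expNegInvGlue 1 := expNegInvGlue.pos_of_pos one_pos
  rw [one_smul] at h1
  refine ⟨2, by norm_num, ?_⟩
  rw [gradient, InnerProductSpace.toDual_symm_apply, h1]
  simp
  field_simp

end

lemma sign_right {h : ℝ → ℝ} {a b : ℝ} (hab : a < b) (hd : deriv h a ≠ 0) (h0 : h a = 0)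
    (hp : ∀ t ∈ Set.Ioo a b, 0 < h t) : 0 < deriv h a := by
  by_contra hcon
  have hneg : deriv h a < 0 := lt_of_le_of_ne (not_lt.1 hcon) hd
  have h1 := (differentiableAt_of_deriv_ne_zero hd).hasDerivAt.tendsto_slope
  have h2 : Filter.Tendsto (slope h a) (nhdsWithin a (Set.Ioi a)) (nhds (deriv h a)) :=
    h1.mono_left (nhdsWithin_mono _ fun x hx => ne_of_gt hx)
  obtain ⟨t, ht1, ht2⟩ := ((h2.eventually (gt_mem_nhds hneg)).and (Ioo_mem_nhdsGT hab)).exists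
  rw [slope_def_field, h0, sub_zero] at ht1
  have := div_pos (hp t ht2) (sub_pos.2 ht2.1)
  linarith

lemma sign_left {h : ℝ → ℝ} {a b : ℝ} (hab : a < b) (hd : deriv h b ≠ 0) (h0 : h b = 0)
    (hp : ∀ t ∈ Set.Ioo a b, 0 < h t) : deriv h b < 0 := by
  by_contra hcon
  have hneg : 0 < deriv h b := lt_of_le_of_ne (not_lt.1 hcon) hd.symm
  have h1 := (differentiableAt_of_deriv_ne_zero hd).hasDerivAt.tendsto_slope
  have h2 : Filter.Tendsto (slope h b) (nhdsWithin b (Set.Iio b)) (nhds (deriv h b)) :=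
    h1.mono_left (nhdsWithin_mono _ fun x hx => ne_of_lt hx)
  obtain ⟨t, ht1, ht2⟩ := ((h2.eventually (lt_mem_nhds hneg)).and (Ioo_mem_nhdsLT hab)).exists
  rw [slope_def_field, h0, sub_zero] at ht1
  have := div_neg_of_pos_of_neg (hp t ht2) (sub_neg.2 ht2.2)
  linarith

lemma const_sign {h : ℝ → ℝ} (hc : Continuous h) {a b : ℝ}
    (hne : ∀ t ∈ Set.Ioo a b, h t ≠ 0) :
    (∀ t ∈ Set.Ioo a b, 0 < h t) ∨ (∀ t ∈ Set.Ioo a b, h t < 0) := by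
  by_contra hcon
  push Not at hcon
  obtain ⟨⟨s, hs, hs'⟩, t, ht, ht'⟩ := hcon
  have := isPreconnected_Ioo.intermediate_value hs ht hc.continuousOn
  obtain ⟨u, hu, hu'⟩ := this ⟨hs', ht'⟩
  exact hne u hu hu'

/-- consecutive zeros of the derivative -/
lemma consec {g : ℝ → ℝ} (hs : ContDiff ℝ (⊤ : ℕ∞) g) {a b : ℝ} (hab : a < b)
    (ha : deriv g a = 0) (hb : deriv g b = 0) (ha2 : deriv (deriv g) a ≠ 0)
    (hb2 : deriv (deriv g) b ≠ 0) (hne : ∀ t ∈ Set.Ioo a b, deriv g t ≠ 0) :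
    ((∀ t ∈ Set.Ioo a b, 0 < deriv g t) ∧ 0 < deriv (deriv g) a ∧ deriv (deriv g) b < 0 ∧ g a < g b) ∨
    ((∀ t ∈ Set.Ioo a b, deriv g t < 0) ∧ deriv (deriv g) a < 0 ∧ 0 < deriv (deriv g) b ∧ g b < g a) := by
  have hc : Continuous (deriv g) := hs.continuous_deriv (by simp)
  rcases const_sign hc hne with h | h
  · left
    refine ⟨h, sign_right hab ha2 ha h, sign_left hab hb2 hb h, ?_⟩
    exact strictMonoOn_of_deriv_pos (convex_Icc a b) hs.continuous.continuousOn
      (by simpa using h) (Set.left_mem_Icc.2 hab.le) (Set.right_mem_Icc.2 hab.le) hab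
  · right
    have h' : ∀ t ∈ Set.Ioo a b, 0 < (-deriv g) t := fun t ht => by simpa using h t ht
    have e : ∀ x, deriv (-deriv g) x = - deriv (deriv g) x := fun x => deriv.neg
    have r1 := sign_right (h := -deriv g) hab (by simpa [e] using ha2) (by simp [ha]) h'
    have r2 := sign_left (h := -deriv g) hab (by simpa [e] using hb2) (by simp [hb]) h'
    rw [e] at r1 r2
    refine ⟨h, by linarith, by linarith, ?_⟩
    exact strictAntiOn_of_deriv_neg (convex_Icc a b) hs.continuous.continuousOn
      (by simpa using h) (Set.left_mem_Icc.2 hab.le) (Set.right_mem_Icc.2 hab.le) hab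

section
variable {n : ℕ} (a : Ribbon n)

lemma deriv_per {g : ℝ → ℝ} {T : ℝ} (hg : Function.Periodic g T) : Function.Periodic (deriv g) T := by
  intro t
  rw [← deriv_comp_add_const]
  congr 1
  exact funext hg

lemma ribbon_crit (t : ℝ) (ht : deriv a.g t = 0) :
    ∃ (i : Fin n) (k : ℤ), t = a.θ i + k * (2 * Real.pi) := by
  have hp := deriv_per a.periodic_g
  obtain ⟨s, ⟨hs1, hs2⟩⟩ : ∃ s ∈ Set.Ico (0 : ℝ) (0 + 2 * Real.pi), ∃ k : ℤ, t = s + k * (2 * Real.pi) := by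
    refine ⟨toIcoMod Real.two_pi_pos 0 t, toIcoMod_mem_Ico _ _ _, toIcoDiv Real.two_pi_pos 0 t, ?_⟩
    have := toIcoMod_add_toIcoDiv_zsmul Real.two_pi_pos 0 t
    rw [zsmul_eq_mul] at this
    exact this.symm
  obtain ⟨k, hk⟩ := hs2
  rw [zero_add] at hs1
  have : deriv a.g s = 0 := by
    rw [← ht, hk]
    exact (hp.int_mul k s).symm
  obtain ⟨i, rfl⟩ := a.crit_only s hs1 this
  exact ⟨i, k, hk⟩

lemma ribbon_gap (i j : Fin n) (hij : (j : ℕ) = i + 1) :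
    ∀ t ∈ Set.Ioo (a.θ i) (a.θ j), deriv a.g t ≠ 0 := by
  intro t ht h0
  obtain ⟨k, rfl⟩ := a.crit_only t ⟨(a.theta_mem i).1.trans ht.1.le, ht.2.trans (a.theta_mem j).2⟩ h0
  have h1 := a.theta_mono.lt_iff_lt.1 ht.1
  have h2 := a.theta_mono.lt_iff_lt.1 ht.2
  rw [Fin.lt_def] at h1 h2
  omega

lemma ribbon_gap_last (i j : Fin n) (hi : (i : ℕ) = 0) (hj : (j : ℕ) + 1 = n) :
    ∀ t ∈ Set.Ioo (a.θ j) (a.θ i + 2 * Real.pi), deriv a.g t ≠ 0 := by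
  intro t ht h0
  by_cases hlt : t < 2 * Real.pi
  · obtain ⟨k, rfl⟩ := a.crit_only t ⟨(a.theta_mem j).1.trans ht.1.le, hlt⟩ h0
    have h1 := a.theta_mono.lt_iff_lt.1 ht.1
    rw [Fin.lt_def] at h1
    omega
  · have h0' : deriv a.g (t - 2 * Real.pi) = 0 := by
      rw [← h0]; exact (deriv_per a.periodic_g).sub_eq t
    have := (a.theta_mem i).2
    obtain ⟨k, hk⟩ := a.crit_only (t - 2 * Real.pi) ⟨by linarith, by linarith [ht.2]⟩ h0'
    have h1 : a.θ k < a.θ i := by rw [← hk]; linarith [ht.2]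
    have h1 := a.theta_mono.lt_iff_lt.1 h1
    rw [Fin.lt_def] at h1
    omega

lemma ribbon_consec (i j : Fin n) (hij : (j : ℕ) = i + 1) :
    ((∀ t ∈ Set.Ioo (a.θ i) (a.θ j), 0 < deriv a.g t) ∧ 0 < deriv (deriv a.g) (a.θ i) ∧
      deriv (deriv a.g) (a.θ j) < 0 ∧ a.g (a.θ i) < a.g (a.θ j)) ∨
    ((∀ t ∈ Set.Ioo (a.θ i) (a.θ j), deriv a.g t < 0) ∧ deriv (deriv a.g) (a.θ i) < 0 ∧
      0 < deriv (deriv a.g) (a.θ j) ∧ a.g (a.θ j) < a.g (a.θ i)) := consec a.smooth_g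
  (a.theta_mono (Fin.lt_def.2 (by omega) : i < j)) (a.node_crit i) (a.node_crit j) (a.node_nondeg i)
  (a.node_nondeg j) (ribbon_gap a i j hij)

lemma ribbon_level (hn : 4 ≤ n) (halt : ∃ c : ℝ, ∀ i j : Fin n, (j : ℕ) = (i : ℕ) + 1 →
      c ∈ Set.uIcc (a.g (a.θ i)) (a.g (a.θ j))) :
    ∃ c, ∀ i, (deriv (deriv a.g) (a.θ i) < 0 → c < a.g (a.θ i)) ∧
      (0 < deriv (deriv a.g) (a.θ i) → a.g (a.θ i) < c) := by
  obtain ⟨c, hc⟩ := halt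
  have hw : ∀ i, (deriv (deriv a.g) (a.θ i) < 0 → c ≤ a.g (a.θ i)) ∧
      (0 < deriv (deriv a.g) (a.θ i) → a.g (a.θ i) ≤ c) := by
    have key : ∀ i j : Fin n, (j : ℕ) = (i : ℕ) + 1 →
        ((deriv (deriv a.g) (a.θ i) < 0 → c ≤ a.g (a.θ i)) ∧
        (0 < deriv (deriv a.g) (a.θ i) → a.g (a.θ i) ≤ c)) ∧
        ((deriv (deriv a.g) (a.θ j) < 0 → c ≤ a.g (a.θ j)) ∧
        (0 < deriv (deriv a.g) (a.θ j) → a.g (a.θ j) ≤ c)) := by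
      intro i j hij
      have h1 := hc i j hij
      rcases ribbon_consec a i j hij with ⟨-, h2, h3, h4⟩ | ⟨-, h2, h3, h4⟩
      · rw [Set.uIcc_of_le h4.le] at h1
        exact ⟨⟨fun h => by linarith, fun _ => h1.1⟩, ⟨fun _ => h1.2, fun h => by linarith⟩⟩
      · rw [Set.uIcc_of_ge h4.le] at h1
        exact ⟨⟨fun _ => h1.2, fun h => by linarith⟩, ⟨fun h => by linarith, fun _ => h1.1⟩⟩
    intro i
    by_cases hi : (i : ℕ) + 1 < n
    · exact (key i ⟨i + 1, hi⟩ rfl).1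
    · exact (key ⟨i - 1, by omega⟩ i (by simp; omega)).2
  by_cases hmax : ∃ j, deriv (deriv a.g) (a.θ j) < 0 ∧ a.g (a.θ j) = c
  · obtain ⟨j, hj1, hj2⟩ := hmax
    have h1 : ∀ i, 0 < deriv (deriv a.g) (a.θ i) → a.g (a.θ i) < c := by
      intro i hi
      refine lt_of_le_of_ne ((hw i).2 hi) fun he => ?_
      have := a.values_distinct i j (he.trans hj2.symm)
      subst this
      linarith
    have h2 : ∀ᶠ d in nhdsWithin c (Set.Iio c), ∀ i, 0 < deriv (deriv a.g) (a.θ i) → a.g (a.θ i) < d := by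
      rw [Filter.eventually_all]
      intro i
      by_cases hi : 0 < deriv (deriv a.g) (a.θ i)
      · filter_upwards [nhdsWithin_le_nhds (lt_mem_nhds (h1 i hi))] with d hd _ using hd
      · exact Filter.Eventually.of_forall fun d hd => absurd hd hi
    obtain ⟨d, hd1, hd2⟩ := (h2.and self_mem_nhdsWithin).exists
    exact ⟨d, fun i => ⟨fun hi => lt_of_lt_of_le hd2 ((hw i).1 hi), hd1 i⟩⟩
  · push Not at hmax
    have h1 : ∀ i, deriv (deriv a.g) (a.θ i) < 0 → c < a.g (a.θ i) := by
      intro i hi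
      exact lt_of_le_of_ne ((hw i).1 hi) (hmax i hi).symm
    have h2 : ∀ᶠ d in nhdsWithin c (Set.Ioi c), ∀ i, deriv (deriv a.g) (a.θ i) < 0 → d < a.g (a.θ i) := by
      rw [Filter.eventually_all]
      intro i
      by_cases hi : deriv (deriv a.g) (a.θ i) < 0
      · filter_upwards [nhdsWithin_le_nhds (gt_mem_nhds (h1 i hi))] with d hd _ using hd
      · exact Filter.Eventually.of_forall fun d hd => absurd hd hi
    obtain ⟨d, hd1, hd2⟩ := (h2.and self_mem_nhdsWithin).exists
    exact ⟨d, fun i => ⟨hd1 i, fun hi => lt_of_le_of_lt ((hw i).2 hi) hd2⟩⟩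

lemma part_two (hn : 4 ≤ n) (hpos : ∀ i, a.ν i = 1)
    (halt : ∃ c : ℝ, ∀ i j : Fin n, (j : ℕ) = (i : ℕ) + 1 →
      c ∈ Set.uIcc (a.g (a.θ i)) (a.g (a.θ j))) :
    ∃ f : E2 → ℝ, IsExtension a f ∧ (critPts f).encard = 1 := by
  obtain ⟨c, hc⟩ := ribbon_level a hn halt
  have hne : ∀ t, deriv a.g t = 0 → a.g t ≠ c := by
    intro t ht
    obtain ⟨i, k, rfl⟩ := ribbon_crit a t ht
    rw [a.periodic_g.int_mul k]
    rcases lt_or_gt_of_ne (a.node_nondeg i) with h | h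
    · exact ((hc i).1 h).ne'
    · exact ((hc i).2 h).ne
  have e1 : 0 < expNegInvGlue 1 := expNegInvGlue.pos_of_pos one_pos
  refine ⟨fExt a.g c, ⟨fExt_contDiff a.periodic_g a.smooth_g c, ?_, ?_, ?_⟩, ?_⟩
  · intro t
    have := fExt_polar a.periodic_g c one_pos t
    rw [one_smul, one_pow] at this
    rw [this]
    field_simp
    ring
  · intro x hx
    refine fExt_ne a.periodic_g a.smooth_g c hne ?_
    rintro rfl
    simp at hx
  · intro i
    obtain ⟨k, hk, e⟩ := fExt_grad a.periodic_g a.smooth_g c (a.θ i)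
    rw [e, hpos i, Int.cast_one, one_mul]
    exact ⟨fun h => mul_pos hk (sub_pos.2 ((hc i).1 h)),
      fun h => mul_neg_of_pos_of_neg hk (sub_neg.2 ((hc i).2 h))⟩
  · have : critPts (fExt a.g c) = {0} := by
      ext x
      simp only [critPts, Set.mem_ofPred_eq, Set.mem_singleton_iff]
      constructor
      · rintro ⟨-, h⟩
        by_contra hx
        exact fExt_ne a.periodic_g a.smooth_g c hne hx h
      · rintro rfl
        exact ⟨by simp, fExt_crit_zero a.periodic_g a.smooth_g c⟩
    rw [this, Set.encard_singleton]

end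

lemma lift_exists (f : E2 → ℝ) (hf : ContDiff ℝ (⊤ : ℕ∞) f)
    (hne : ∀ x : E2, ‖x‖ ≤ 1 → fderiv ℝ f x ≠ 0) :
    ∃ A : E2 → ℂ, Continuous A ∧ ∀ x, ‖x‖ = 1 → Complex.exp (A x) = toC (gradient f x) := by
  have hgc : Continuous (gradient f) := by
    unfold gradient
    exact (InnerProductSpace.toDual ℝ E2).symm.continuous.comp (hf.continuous_fderiv (by simp))
  have hpr : Continuous (fun x : E2 => (max 1 ‖x‖)⁻¹ • x) := by
    have h1 : Continuous (fun x : E2 => max 1 ‖x‖) := by fun_prop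
    have h2 : Continuous (fun x : E2 => (max 1 ‖x‖)⁻¹) := h1.inv₀ fun x => by positivity
    exact h2.smul continuous_id
  let F : C(E2, ℂ) := ⟨fun x => toC (gradient f ((max 1 ‖x‖)⁻¹ • x)),
    toC_contDiff.continuous.comp (hgc.comp hpr)⟩
  have hF : ∀ x, F x ∈ ({0}ᶜ : Set ℂ) := by
    intro x
    refine toC_ne fun h0 => hne ((max 1 ‖x‖)⁻¹ • x) ?_ ?_
    · rw [norm_smul, Real.norm_of_nonneg (by positivity), inv_mul_le_one₀ (by positivity)]
      exact le_max_right _ _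
    · simpa [gradient] using h0
  obtain ⟨A, ⟨-, hA⟩, -⟩ := Complex.isCoveringMapOn_exp.existsUnique_continuousMap_lifts F
    (a₀ := 0) (e₀ := Complex.log (F 0)) (Complex.exp_log (hF 0)) hF
  refine ⟨A, A.continuous, fun x hx => ?_⟩
  have := congrFun hA x
  simp only [Function.comp] at this
  rw [this]
  simp [F, hx]

lemma step {β : ℝ → ℝ} (hβ : Continuous β) {a b : ℝ} (hab : a < b) (ha : Real.sin (β a) = 0)
    (hm : ∀ t ∈ Set.Ioo a b, Real.cos (β a) * Real.sin (β t) < 0)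
    (hb : Real.cos (β a) * Real.cos (β b) < 0) (hb' : Real.sin (β b) = 0) :
    β b ≤ β a - Real.pi := by
  by_contra hcon
  push Not at hcon
  have hsq : Real.cos (β a) ^ 2 = 1 := by have := Real.sin_sq_add_cos_sq (β a); rw [ha] at this; linarith
  have hsb : Real.sin (β b - β a) = 0 := by rw [Real.sin_sub, ha, hb']; ring
  have hcb : Real.cos (β b - β a) < 0 := by rw [Real.cos_sub, ha]; linarith
  have hge : Real.pi / 2 ≤ β b - β a := by
    by_contra hlt
    push Not at hlt
    by_cases h1 : -(Real.pi / 2) ≤ β b - β a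
    · have := Real.cos_nonneg_of_mem_Icc ⟨h1, hlt.le⟩
      linarith
    · push Not at h1
      have := Real.sin_neg_of_neg_of_neg_pi_lt (by linarith [Real.pi_pos] : β b - β a < 0) (by linarith)
      linarith
  obtain ⟨t, ht, ht'⟩ := intermediate_value_Icc hab.le hβ.continuousOn
    (⟨by linarith [Real.pi_pos], by linarith⟩ : β a + Real.pi / 2 ∈ Set.Icc (β a) (β b))
  have hta : t ≠ a := by rintro rfl; linarith [Real.pi_pos]
  have htb : t ≠ b := by
    rintro rfl
    rw [ht', add_sub_cancel_left, Real.sin_pi_div_two] at hsb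
    linarith
  have := hm t ⟨lt_of_le_of_ne ht.1 hta.symm, lt_of_le_of_ne ht.2 htb⟩
  rw [ht', Real.sin_add_pi_div_two] at this
  nlinarith

lemma sph_per (t : ℝ) : sphPt (t + 2 * Real.pi) = sphPt t := by
  simp [sphPt]

lemma part_one {n : ℕ} (a : Ribbon n) (hn : 4 ≤ n) (hpos : ∀ i, a.ν i = 1)
    (f : E2 → ℝ) (hf : IsExtension a f) : 1 ≤ (critPts f).encard := by
  rw [Set.one_le_encard_iff_nonempty]
  by_contra hemp
  rw [Set.not_nonempty_iff_eq_empty] at hemp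
  obtain ⟨hs, hbd, hsph, hnode⟩ := hf
  have hne : ∀ x : E2, ‖x‖ ≤ 1 → fderiv ℝ f x ≠ 0 := by
    intro x hx h0
    rcases hx.lt_or_eq with h | h
    · have : x ∈ critPts f := ⟨by simpa using h, h0⟩
      simp [hemp] at this
    · exact hsph x (by simpa using h) h0
  obtain ⟨A, hA, hexp⟩ := lift_exists f hs hne
  have hsc : Continuous sphPt := continuous_iff_continuousAt.2 fun t => (sph_deriv t).continuousAt
  have hin : ∀ t s, ⟪gradient f (sphPt t), sphPt s⟫ =
      Real.exp (A (sphPt t)).re * Real.cos ((A (sphPt t)).im - s) := by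
    intro t s
    have h1 := hexp (sphPt t) (sph_norm t)
    have h2 := congrArg Complex.re h1
    have h3 := congrArg Complex.im h1
    rw [Complex.exp_re, toC_re] at h2
    rw [Complex.exp_im, toC_im] at h3
    rw [PiLp.inner_apply, Fin.sum_univ_two, ← h2, ← h3, Real.cos_sub]
    simp [sphPt]
    ring
  set β : ℝ → ℝ := fun t => (A (sphPt t)).im - t with hβ
  have hβc : Continuous β := by
    have := Complex.continuous_im.comp (hA.comp hsc)
    exact this.sub continuous_id
  have hβp : ∀ t, β (t + 2 * Real.pi) = β t - 2 * Real.pi := by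
    intro t
    simp only [hβ, sph_per]
    ring
  have hg' : ∀ t, deriv a.g t = Real.exp (A (sphPt t)).re * Real.sin (β t) := by
    intro t
    have h1 : HasFDerivAt f (fderiv ℝ f (sphPt t)) (sphPt t) :=
      (hs.differentiable (by simp) _).hasFDerivAt
    have h2 := (h1.comp_hasDerivAt t (sph_deriv t)).deriv
    have h3 : f ∘ sphPt = a.g := funext hbd
    rw [h3] at h2
    have h4 := hin t (t + Real.pi / 2)
    rw [gradient, InnerProductSpace.toDual_symm_apply] at h4
    rw [h2, h4, ← sub_sub, Real.cos_sub_pi_div_two]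
  have hsin0 : ∀ i, Real.sin (β (a.θ i)) = 0 := by
    intro i
    have := hg' (a.θ i)
    rw [a.node_crit i] at this
    simpa using this.symm
  have hcos : ∀ i, (deriv (deriv a.g) (a.θ i) < 0 → 0 < Real.cos (β (a.θ i))) ∧
      (0 < deriv (deriv a.g) (a.θ i) → Real.cos (β (a.θ i)) < 0) := by
    intro i
    have := hnode i
    rw [hpos i, hin, Int.cast_one, one_mul] at this
    exact ⟨fun h => pos_of_mul_pos_right (this.1 h) (Real.exp_pos _).le,
      fun h => by
        by_contra hc
        have h5 := mul_nonneg (Real.exp_pos (A (sphPt (a.θ i))).re).le (not_lt.1 hc)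
        have h6 := this.2 h
        simp only [hβ] at h5
        linarith⟩
  have hsinpos : ∀ t, 0 < deriv a.g t → 0 < Real.sin (β t) := fun t h => by
    rw [hg'] at h; exact pos_of_mul_pos_right h (Real.exp_pos _).le
  have hsinneg : ∀ t, deriv a.g t < 0 → Real.sin (β t) < 0 := fun t h => by
    rw [hg'] at h
    by_contra hc
    have := mul_nonneg (Real.exp_pos (A (sphPt t)).re).le (not_lt.1 hc)
    linarith
  have hstep : ∀ i j : Fin n, (j : ℕ) = i + 1 → β (a.θ j) ≤ β (a.θ i) - Real.pi := by
    intro i j hij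
    have hlt : a.θ i < a.θ j := a.theta_mono (Fin.lt_def.2 (by omega))
    rcases ribbon_consec a i j hij with ⟨h1, h2, h3, -⟩ | ⟨h1, h2, h3, -⟩
    · exact step hβc hlt (hsin0 i)
        (fun t ht => mul_neg_of_neg_of_pos ((hcos i).2 h2) (hsinpos t (h1 t ht)))
        (mul_neg_of_neg_of_pos ((hcos i).2 h2) ((hcos j).1 h3)) (hsin0 j)
    · exact step hβc hlt (hsin0 i)
        (fun t ht => mul_neg_of_pos_of_neg ((hcos i).1 h2) (hsinneg t (h1 t ht)))
        (mul_neg_of_pos_of_neg ((hcos i).1 h2) ((hcos j).2 h3)) (hsin0 j)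
  have hind : ∀ m : ℕ, ∀ hm : m < n, β (a.θ ⟨m, hm⟩) ≤ β (a.θ ⟨0, by omega⟩) - m * Real.pi := by
    intro m
    induction m with
    | zero => intro hm; simp
    | succ m ih =>
      intro hm
      have h1 := ih (by omega)
      have h2 := hstep ⟨m, by omega⟩ ⟨m + 1, hm⟩ rfl
      push_cast
      linarith
  -- the wrap-around step
  set i0 : Fin n := ⟨0, by omega⟩ with hi0
  set j0 : Fin n := ⟨n - 1, by omega⟩ with hj0
  have hlast : β (a.θ i0 + 2 * Real.pi) ≤ β (a.θ j0) - Real.pi := by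
    have hlt : a.θ j0 < a.θ i0 + 2 * Real.pi := by
      linarith [(a.theta_mem i0).1, (a.theta_mem j0).2]
    have hp1 := deriv_per a.periodic_g
    have hp2 := deriv_per hp1
    have hsb : Real.sin (β (a.θ i0 + 2 * Real.pi)) = 0 := by
      rw [hβp, Real.sin_sub_two_pi]; exact hsin0 i0
    have hcb : Real.cos (β (a.θ i0 + 2 * Real.pi)) = Real.cos (β (a.θ i0)) := by
      rw [hβp, Real.cos_sub_two_pi]
    rcases consec a.smooth_g hlt (a.node_crit j0) (by rw [hp1]; exact a.node_crit i0)
      (a.node_nondeg j0) (by rw [hp2]; exact a.node_nondeg i0)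
      (ribbon_gap_last a i0 j0 rfl (by simp [hj0]; omega)) with ⟨h1, h2, h3, -⟩ | ⟨h1, h2, h3, -⟩
    · rw [hp2] at h3
      exact step hβc hlt (hsin0 j0)
        (fun t ht => mul_neg_of_neg_of_pos ((hcos j0).2 h2) (hsinpos t (h1 t ht)))
        (by rw [hcb]; exact mul_neg_of_neg_of_pos ((hcos j0).2 h2) ((hcos i0).1 h3)) hsb
    · rw [hp2] at h3
      exact step hβc hlt (hsin0 j0)
        (fun t ht => mul_neg_of_pos_of_neg ((hcos j0).1 h2) (hsinneg t (h1 t ht)))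
        (by rw [hcb]; exact mul_neg_of_pos_of_neg ((hcos j0).1 h2) ((hcos i0).2 h3)) hsb
  have h1 := hind (n - 1) (by omega)
  rw [hβp] at hlast
  have h3 : (3 : ℝ) ≤ ((n - 1 : ℕ) : ℝ) := by exact_mod_cast (by omega : 3 ≤ n - 1)
  have := mul_le_mul_of_nonneg_right h3 Real.pi_pos.le
  linarith [Real.pi_pos]

/-- If `a` is a positive alternation with `n ≥ 4` nodes (all nodes positive and the closed
intervals with endpoints `l i`, `l (i+1)` for consecutive nodes `i = 1, …, n−1` have a common
point), then `γ(a) = 1`: every extension of `a` has at least one critical point in the open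
unit disk and some extension has exactly one critical point. -/
theorem stmt_18 (n : ℕ) (hn : 4 ≤ n) (a : Ribbon n) (hpos : ∀ i, a.ν i = 1)
    (halt : ∃ c : ℝ, ∀ i j : Fin n, (j : ℕ) = (i : ℕ) + 1 →
      c ∈ Set.uIcc (a.g (a.θ i)) (a.g (a.θ j))) :
    (∀ f : E2 → ℝ, IsExtension a f → 1 ≤ (critPts f).encard) ∧
    (∃ f : E2 → ℝ, IsExtension a f ∧ (critPts f).encard = 1) ∧
    gammaR a = 1 := by
  have h1 := part_one a hn hpos
  have h2 := part_two a hn hpos halt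
  refine ⟨h1, h2, le_antisymm ?_ ?_⟩
  · obtain ⟨f, hf, hk⟩ := h2
    exact sInf_le ⟨f, hf, hk⟩
  · refine le_sInf ?_
    rintro k ⟨f, hf, rfl⟩
    exact h1 f hf
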